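/- Let d ≥ 1, k > 0, ε ∈ (0,0.1), τ ∈ (0,1), δ ∈ (0,1). Let Z : ℝ^d → ℝ be k-Lipschitz with respect to the Euclidean norm and satisfy Z(q) ≥ τ for all q with ‖q‖₂ ≤ 1. Let ε₀ = ε·τ/k, let N ⊆ {x ∈ ℝ^d : ‖x‖₂ ≤ 1} be a finite ε₀-net of the Euclidean unit ball, and let π : {q : ‖q‖₂ ≤ 1} → N map each q to a net point π(q) ∈ N with ‖q − π(q)‖₂ ≤ ε₀. Suppose that for each p ∈ N, Ỹ(p) is a real-valued random variable satisfying Pr[(1−ε)·Z(p) ≤ Ỹ(p) ≤ (1+ε)·Z(p)] ≥ 1 − δ/|N|. Then with probability at least 1 − δ, simultaneously for all q ∈ ℝ^d with ‖q‖₂ ≤ 1: (1−3ε)·Z(q) ≤ Ỹ(π(q)) ≤ (1+3ε)·Z(q). -/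

import Mathlib

open MeasureTheory ProbabilityTheory

/-!
On the event that every net estimate is `(1 ± ε)`-accurate, all queries are accurate at once:
`|Z q - Z (π q)| ≤ k ε₀ = ε τ ≤ ε Z q`, so `Y (π q)` lies between `(1 - ε)² Z q` and
`(1 + ε)² Z q`, which in turn lie between `(1 - 3ε) Z q` and `(1 + 3ε) Z q`. The union bound is
paid only over the finite net, hence queries may depend on the randomness of the estimators.
-/

section UnionBound

variable {Ω ι : Type*} [MeasurableSpace Ω] {μ : Measure Ω} [IsProbabilityMeasure μ]
  {s : Finset ι} {A : ι → Set Ω}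

lemma one_sub_sum_le_measureReal_biInter {δ : ι → ℝ} (hA : ∀ i ∈ s, NullMeasurableSet (A i) μ)
    (hδ : ∀ i ∈ s, 1 - δ i ≤ μ.real (A i)) :
    1 - ∑ i ∈ s, δ i ≤ μ.real (⋂ i ∈ s, A i) := by
  have hcompl : ∀ i ∈ s, μ.real (A i)ᶜ ≤ δ i := fun i hi ↦ by
    rw [probReal_compl_eq_one_sub₀ (hA i hi)]
    linarith [hδ i hi]
  have hunion : μ.real (⋂ i ∈ s, A i)ᶜ ≤ ∑ i ∈ s, δ i := by
    simp only [Set.compl_iInter]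
    exact (measureReal_biUnion_finset_le _ _).trans (Finset.sum_le_sum hcompl)
  rw [probReal_compl_eq_one_sub₀ (s.nullMeasurableSet_biInter hA)] at hunion
  linarith

lemma ofReal_one_sub_le_measure_biInter {δ : ℝ} (hδ : 0 ≤ δ)
    (hA : ∀ i ∈ s, NullMeasurableSet (A i) μ)
    (hprob : ∀ i ∈ s, ENNReal.ofReal (1 - δ / s.card) ≤ μ (A i)) :
    ENNReal.ofReal (1 - δ) ≤ μ (⋂ i ∈ s, A i) := by
  have hsum : ∑ _i ∈ s, δ / (s.card : ℝ) ≤ δ := by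
    rw [Finset.sum_const, nsmul_eq_mul, mul_div_left_comm]
    exact mul_le_of_le_one_right hδ (div_self_le_one _)
  rw [ENNReal.ofReal_le_iff_le_toReal (measure_ne_top _ _)]
  calc 1 - δ ≤ 1 - ∑ _i ∈ s, δ / (s.card : ℝ) := by gcongr
    _ ≤ μ.real (⋂ i ∈ s, A i) := one_sub_sum_le_measureReal_biInter hA fun i hi ↦
      (ENNReal.ofReal_le_iff_le_toReal (measure_ne_top _ _)).1 (hprob i hi)

end UnionBound

section RelativeError

variable {R : Type*} [CommRing R] [LinearOrder R] [IsStrictOrderedRing R] {ε η z w : R}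

lemma Icc_one_sub_mul_one_add_mul_subset (hε : ε ∈ Set.Icc 0 1) (hzw : |z - w| ≤ η * z) :
    Set.Icc ((1 - ε) * w) ((1 + ε) * w) ⊆
      Set.Icc ((1 - ε) * ((1 - η) * z)) ((1 + ε) * ((1 + η) * z)) := by
  obtain ⟨hlower, hupper⟩ := abs_le.1 hzw
  exact Set.Icc_subset_Icc
    (mul_le_mul_of_nonneg_left (by linarith) (sub_nonneg.2 hε.2))
    (mul_le_mul_of_nonneg_left (by linarith) (add_nonneg zero_le_one hε.1))

lemma Icc_one_sub_mul_subset_Icc_one_sub_three_mul (hε : ε ∈ Set.Icc 0 1)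
    (hzw : |z - w| ≤ ε * z) :
    Set.Icc ((1 - ε) * w) ((1 + ε) * w) ⊆ Set.Icc ((1 - 3 * ε) * z) ((1 + 3 * ε) * z) := by
  have hεz : 0 ≤ ε * z := (abs_nonneg _).trans hzw
  have hεεz : 0 ≤ ε * (ε * z) := mul_nonneg hε.1 hεz
  have hεεz_le : ε * (ε * z) ≤ ε * z := mul_le_of_le_one_left hεz hε.2
  exact (Icc_one_sub_mul_one_add_mul_subset hε hzw).trans
    (Set.Icc_subset_Icc (by linarith) (by linarith))

end RelativeError

section Net

variable {E : Type*} [PseudoMetricSpace E] {S : Set E} {K : NNReal} {Z : E → ℝ} {ε ε₀ τ : ℝ}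

lemma abs_sub_le_mul_of_lipschitzOnWith (hZ : LipschitzOnWith K Z S) (hε : 0 ≤ ε)
    (hε₀ : K * ε₀ ≤ ε * τ) {q p : E} (hq : q ∈ S) (hp : p ∈ S) (hqp : dist q p ≤ ε₀)
    (hτ : τ ≤ Z q) : |Z q - Z p| ≤ ε * Z q :=
  calc |Z q - Z p| ≤ K * dist q p := hZ.dist_le_mul q hq p hp
    _ ≤ K * ε₀ := by gcongr
    _ ≤ ε * τ := hε₀
    _ ≤ ε * Z q := by gcongr

theorem adam_hash_all_queries_general {Ω : Type*} [MeasurableSpace Ω] {μ : Measure Ω}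
    [IsProbabilityMeasure μ] {δ : ℝ} {N : Finset E} {π : E → E} {Y : E → Ω → ℝ}
    (hε : ε ∈ Set.Icc 0 1) (hδ : 0 ≤ δ) (hZ : LipschitzOnWith K Z S)
    (hτ : ∀ q ∈ S, τ ≤ Z q) (hε₀ : K * ε₀ ≤ ε * τ) (hNS : ↑N ⊆ S)
    (hπ : ∀ q ∈ S, π q ∈ N ∧ dist q (π q) ≤ ε₀)
    (hY : ∀ p ∈ N, AEMeasurable (Y p) μ)
    (hprob : ∀ p ∈ N, ENNReal.ofReal (1 - δ / N.card) ≤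
      μ {ω | Y p ω ∈ Set.Icc ((1 - ε) * Z p) ((1 + ε) * Z p)}) :
    ENNReal.ofReal (1 - δ) ≤
      μ {ω | ∀ q ∈ S, Y (π q) ω ∈ Set.Icc ((1 - 3 * ε) * Z q) ((1 + 3 * ε) * Z q)} := by
  refine (ofReal_one_sub_le_measure_biInter hδ
    (fun p hp ↦ (hY p hp).nullMeasurableSet_preimage measurableSet_Icc) hprob).trans
    (measure_mono fun ω hω q hq ↦ ?_)
  obtain ⟨hπN, hdist⟩ := hπ q hq
  have hclose : |Z q - Z (π q)| ≤ ε * Z q :=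
    abs_sub_le_mul_of_lipschitzOnWith hZ hε.1 hε₀ hq (hNS hπN) hdist (hτ q hq)
  exact Icc_one_sub_mul_subset_Icc_one_sub_three_mul hε hclose (Set.mem_iInter₂.1 hω (π q) hπN)

end Net

/-- **Adaptive correctness of Adam-Hash queries on the unit ball.** Let `d ≥ 1`, `k > 0`,
`ε ∈ (0,0.1)`, `τ ∈ (0,1)`, `δ ∈ (0,1)`. Let `Z : ℝ^d → ℝ` be `k`-Lipschitz with `Z q ≥ τ` on
the unit ball, let `ε₀ = ε τ / k`, let `N` be a finite `ε₀`-net of the unit ball, and let `π`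
map each point `q` of the unit ball to a net point `π q ∈ N` with `‖q − π q‖ ≤ ε₀`. If for
each `p ∈ N` the random variable `Ỹ p` satisfies
`Pr[(1−ε)Z(p) ≤ Ỹ(p) ≤ (1+ε)Z(p)] ≥ 1 − δ/|N|`, then with probability at least `1 − δ`,
simultaneously for all `q` with `‖q‖ ≤ 1`: `(1−3ε)Z(q) ≤ Ỹ(π(q)) ≤ (1+3ε)Z(q)`. -/
theorem adam_hash_all_queries
    {Ω : Type*} [MeasureSpace Ω] [IsProbabilityMeasure (ℙ : Measure Ω)]
    {d : ℕ} (hd : 1 ≤ d) (k ε τ δ : ℝ) (hk : 0 < k)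
    (hε : ε ∈ Set.Ioo (0 : ℝ) 0.1) (hτ : τ ∈ Set.Ioo (0 : ℝ) 1) (hδ : δ ∈ Set.Ioo (0 : ℝ) 1)
    (Z : EuclideanSpace ℝ (Fin d) → ℝ)
    (hZlip : ∀ q₁ q₂ : EuclideanSpace ℝ (Fin d), |Z q₁ - Z q₂| ≤ k * ‖q₁ - q₂‖)
    (hZτ : ∀ q : EuclideanSpace ℝ (Fin d), ‖q‖ ≤ 1 → τ ≤ Z q)
    (ε₀ : ℝ) (hε₀ : ε₀ = ε * τ / k)
    (N : Finset (EuclideanSpace ℝ (Fin d)))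
    (hNball : ∀ p ∈ N, ‖p‖ ≤ 1)
    (hNnet : ∀ q : EuclideanSpace ℝ (Fin d), ‖q‖ ≤ 1 → ∃ p ∈ N, ‖q - p‖ ≤ ε₀)
    (π : EuclideanSpace ℝ (Fin d) → EuclideanSpace ℝ (Fin d))
    (hπ : ∀ q : EuclideanSpace ℝ (Fin d), ‖q‖ ≤ 1 → π q ∈ N ∧ ‖q - π q‖ ≤ ε₀)
    (Y : EuclideanSpace ℝ (Fin d) → Ω → ℝ)
    (hmeas : ∀ p ∈ N, Measurable (Y p))
    (hgood : ∀ p ∈ N, ENNReal.ofReal (1 - δ / (N.card : ℝ)) ≤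
      ℙ {ω | (1 - ε) * Z p ≤ Y p ω ∧ Y p ω ≤ (1 + ε) * Z p}) :
    ENNReal.ofReal (1 - δ) ≤
      ℙ {ω | ∀ q : EuclideanSpace ℝ (Fin d), ‖q‖ ≤ 1 →
        (1 - 3 * ε) * Z q ≤ Y (π q) ω ∧ Y (π q) ω ≤ (1 + 3 * ε) * Z q} := by
  lift k to NNReal using hk.le
  have hZ : LipschitzOnWith k Z {q | ‖q‖ ≤ 1} := .of_dist_le_mul fun x _ y _ ↦ by
    simpa only [dist_eq_norm, Real.norm_eq_abs] using hZlip x y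
  have hkε₀ : k * ε₀ ≤ ε * τ := by rw [hε₀, mul_div_cancel₀ _ hk.ne']
  exact adam_hash_all_queries_general ⟨hε.1.le, hε.2.le.trans (by norm_num)⟩ hδ.1.le hZ hZτ
    hkε₀ (fun p hp ↦ hNball p hp) (fun q hq ↦ by simpa only [dist_eq_norm] using hπ q hq)
    (fun p hp ↦ (hmeas p hp).aemeasurable) hgood
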